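/- (Converse part of Theorem 3, common randomness size.) In the MM-SPIR model (with all constraints), suppose in addition that the common randomness S takes values in F_q^{s} for some natural number s (a string of s symbols from the field with q elements). Then s ≥ ⌈P·L / (N−1)⌉. -/

import Mathlib

open Finset

namespace MMSPIR

variable {Ω : Type} [Fintype Ω]

/-- Probability that the random variable `X` takes the value `v`,
under the weight function `p` on the finite sample space `Ω`. -/
noncomputable def prob (p : Ω → ℝ) {V : Type} [DecidableEq V] (X : Ω → V) (v : V) : ℝ :=
  ∑ ω ∈ Finset.univ.filter (fun ω => X ω = v), p ω

/-- Shannon entropy of `X`, with logarithm taken to base `q`. -/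
noncomputable def ent (q : ℕ) (p : Ω → ℝ) {V : Type} [Fintype V] [DecidableEq V]
    (X : Ω → V) : ℝ :=
  -∑ v : V, prob p X v * Real.logb q (prob p X v)

/-- Conditional entropy `H(X | Y)`, base `q`. -/
noncomputable def cent (q : ℕ) (p : Ω → ℝ) {V W : Type} [Fintype V] [DecidableEq V]
    [Fintype W] [DecidableEq W] (X : Ω → V) (Y : Ω → W) : ℝ :=
  ent q p (fun ω => (X ω, Y ω)) - ent q p Y

/-- Mutual information `I(X ; Y)`, base `q`. -/
noncomputable def mi (q : ℕ) (p : Ω → ℝ) {V W : Type} [Fintype V] [DecidableEq V]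
    [Fintype W] [DecidableEq W] (X : Ω → V) (Y : Ω → W) : ℝ :=
  ent q p X + ent q p Y - ent q p (fun ω => (X ω, Y ω))

/-- Conditional mutual information `I(X ; Y | Z)`, base `q`. -/
noncomputable def cmi (q : ℕ) (p : Ω → ℝ) {U V W : Type} [Fintype U] [DecidableEq U]
    [Fintype V] [DecidableEq V] [Fintype W] [DecidableEq W]
    (X : Ω → U) (Y : Ω → V) (Z : Ω → W) : ℝ :=
  cent q p X Z + cent q p Y Z - cent q p (fun ω => (X ω, Y ω)) Z

/-- `X` and `Y` have the same distribution. -/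
def IdentDist (p : Ω → ℝ) {V : Type} [DecidableEq V] (X Y : Ω → V) : Prop :=
  ∀ v, prob p X v = prob p Y v

section helpers

variable {p : Ω → ℝ} {q : ℕ}

lemma prob_nonneg' (hp0 : ∀ ω, 0 ≤ p ω) {V : Type} [DecidableEq V] (X : Ω → V) (v : V) :
    0 ≤ prob p X v := Finset.sum_nonneg (fun ω _ => hp0 ω)

lemma le_prob (hp0 : ∀ ω, 0 ≤ p ω) {V : Type} [DecidableEq V] (X : Ω → V) (ω : Ω) :
    p ω ≤ prob p X (X ω) := by
  unfold prob
  exact Finset.single_le_sum (f := p) (fun i _ => hp0 i) (by simp)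

lemma sum_prob_mul {V : Type} [Fintype V] [DecidableEq V] (X : Ω → V) (g : V → ℝ) :
    ∑ v, prob p X v * g v = ∑ ω, p ω * g (X ω) := by
  rw [← Finset.sum_fiberwise Finset.univ X (fun ω => p ω * g (X ω))]
  refine Finset.sum_congr rfl fun v _ => ?_
  rw [prob, Finset.sum_mul]
  refine Finset.sum_congr rfl fun ω hω => ?_
  rw [(Finset.mem_filter.1 hω).2]

lemma sum_prob {V : Type} [Fintype V] [DecidableEq V] (X : Ω → V) :
    ∑ v, prob p X v = ∑ ω, p ω := by
  simpa using sum_prob_mul (p := p) X (fun _ => 1)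

lemma ent_eq {V : Type} [Fintype V] [DecidableEq V] (X : Ω → V) :
    ent q p X = - ∑ ω, p ω * Real.logb q (prob p X (X ω)) := by
  unfold ent
  rw [sum_prob_mul X (fun v => Real.logb q (prob p X v))]

lemma ent_mono (hq : 1 < q) (hp0 : ∀ ω, 0 ≤ p ω) {V U : Type} [Fintype V] [DecidableEq V]
    [Fintype U] [DecidableEq U] (Y : Ω → V) (X : Ω → U)
    (h : ∀ ω ω', X ω = X ω' → Y ω = Y ω') : ent q p Y ≤ ent q p X := by
  rw [ent_eq, ent_eq]
  refine neg_le_neg (Finset.sum_le_sum fun ω _ => ?_)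
  rcases (hp0 ω).eq_or_lt with h0 | h0
  · simp [← h0]
  refine mul_le_mul_of_nonneg_left ?_ (hp0 ω)
  refine Real.logb_le_logb_of_le (by exact_mod_cast hq) (h0.trans_le (le_prob hp0 X ω)) ?_
  unfold prob
  refine Finset.sum_le_sum_of_subset_of_nonneg ?_ (fun i _ _ => hp0 i)
  intro ω' hω'
  simp only [Finset.mem_filter, Finset.mem_univ, true_and] at *
  exact h _ _ hω'

lemma prob_fst {V U : Type} [Fintype V] [DecidableEq V] [Fintype U] [DecidableEq U]
    (X : Ω → V) (Z : Ω → U) (z : U) :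
    ∑ x, prob p (fun ω => (X ω, Z ω)) (x, z) = prob p Z z := by
  unfold prob
  rw [← Finset.sum_fiberwise _ X]
  refine Finset.sum_congr rfl fun x _ => Finset.sum_congr ?_ fun _ _ => rfl
  ext ω
  simp [and_comm]

lemma ent_sub (hq : 1 < q) (hp0 : ∀ ω, 0 ≤ p ω)
    {T V U : Type} [Fintype T] [DecidableEq T] [Fintype V] [DecidableEq V]
    [Fintype U] [DecidableEq U] (X : Ω → T) (Y : Ω → V) (Z : Ω → U) :
    ent q p (fun ω => (X ω, Y ω, Z ω)) + ent q p Z ≤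
      ent q p (fun ω => (X ω, Z ω)) + ent q p (fun ω => (Y ω, Z ω)) := by
  have hlq : 0 < Real.log q := Real.log_pos (by exact_mod_cast hq)
  let PJ := prob p (fun ω => (X ω, Y ω, Z ω))
  let PX := prob p (fun ω => (X ω, Z ω))
  let PY := prob p (fun ω => (Y ω, Z ω))
  let PZ := prob p Z
  have nJ : ∀ v, 0 ≤ PJ v := prob_nonneg' hp0 _
  have nX : ∀ v, 0 ≤ PX v := prob_nonneg' hp0 _
  have nY : ∀ v, 0 ≤ PY v := prob_nonneg' hp0 _
  have nZ : ∀ v, 0 ≤ PZ v := prob_nonneg' hp0 _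
  have key : ∑ ω, p ω * (PX (X ω, Z ω) * PY (Y ω, Z ω) / (PJ (X ω, Y ω, Z ω) * PZ (Z ω)))
      ≤ ∑ ω, p ω := by
    rw [← sum_prob_mul (p := p) (fun ω => (X ω, Y ω, Z ω))
      (fun v => PX (v.1, v.2.2) * PY (v.2.1, v.2.2) / (PJ v * PZ v.2.2)), ← sum_prob (p := p) Z]
    have h1 : ∀ v : T × V × U, prob p (fun ω => (X ω, Y ω, Z ω)) v *
        (PX (v.1, v.2.2) * PY (v.2.1, v.2.2) / (PJ v * PZ v.2.2)) ≤
        PX (v.1, v.2.2) * PY (v.2.1, v.2.2) / PZ v.2.2 := by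
      intro v
      change PJ v * _ ≤ _
      rcases (nJ v).eq_or_lt with h0 | h0
      · rw [← h0]
        simp only [zero_mul]
        exact div_nonneg (mul_nonneg (nX _) (nY _)) (nZ _)
      · apply le_of_eq
        rw [← mul_div_assoc, mul_div_mul_left _ _ h0.ne']
    refine (Finset.sum_le_sum fun v _ => h1 v).trans ?_
    rw [Fintype.sum_prod_type, Finset.sum_congr rfl (fun x _ => Fintype.sum_prod_type_right _),
      Finset.sum_comm]
    refine Finset.sum_le_sum fun z _ => ?_
    change ∑ x, ∑ y, PX (x, z) * PY (y, z) / PZ z ≤ PZ z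
    have hx : ∑ x, PX (x, z) = PZ z := prob_fst X Z z
    have hy : ∑ y, PY (y, z) = PZ z := prob_fst Y Z z
    have : ∑ x, ∑ y, PX (x, z) * PY (y, z) / PZ z = PZ z * PZ z / PZ z := by
      simp_rw [← Finset.sum_div, ← Finset.mul_sum, hy, ← Finset.sum_mul, hx]
    rw [this, mul_self_div_self]
  have h2 : ∑ ω, p ω * (1 - PX (X ω, Z ω) * PY (Y ω, Z ω) / (PJ (X ω, Y ω, Z ω) * PZ (Z ω))) ≤
      ∑ ω, p ω * (Real.log (PJ (X ω, Y ω, Z ω)) + Real.log (PZ (Z ω))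
        - Real.log (PX (X ω, Z ω)) - Real.log (PY (Y ω, Z ω))) := by
    refine Finset.sum_le_sum fun ω _ => ?_
    rcases (hp0 ω).eq_or_lt with h0 | h0
    · simp [← h0]
    refine mul_le_mul_of_nonneg_left ?_ (hp0 ω)
    have aJ : 0 < PJ (X ω, Y ω, Z ω) := h0.trans_le (le_prob hp0 (fun ω => (X ω, Y ω, Z ω)) ω)
    have aX : 0 < PX (X ω, Z ω) := h0.trans_le (le_prob hp0 (fun ω => (X ω, Z ω)) ω)
    have aY : 0 < PY (Y ω, Z ω) := h0.trans_le (le_prob hp0 (fun ω => (Y ω, Z ω)) ω)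
    have aZ : 0 < PZ (Z ω) := h0.trans_le (le_prob hp0 Z ω)
    have := Real.log_le_sub_one_of_pos (div_pos (mul_pos aX aY) (mul_pos aJ aZ))
    rw [Real.log_div (mul_pos aX aY).ne' (mul_pos aJ aZ).ne', Real.log_mul aX.ne' aY.ne',
      Real.log_mul aJ.ne' aZ.ne'] at this
    linarith
  have h3 : 0 ≤ ∑ ω, p ω * (Real.log (PJ (X ω, Y ω, Z ω)) + Real.log (PZ (Z ω))
        - Real.log (PX (X ω, Z ω)) - Real.log (PY (Y ω, Z ω))) := by
    refine le_trans ?_ h2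
    simp_rw [mul_sub, mul_one]
    rw [Finset.sum_sub_distrib]
    linarith
  simp only [ent_eq, Real.logb]
  change -∑ ω, p ω * (Real.log (PJ (X ω, Y ω, Z ω)) / Real.log q) +
    -∑ ω, p ω * (Real.log (PZ (Z ω)) / Real.log q) ≤
    -∑ ω, p ω * (Real.log (PX (X ω, Z ω)) / Real.log q) +
    -∑ ω, p ω * (Real.log (PY (Y ω, Z ω)) / Real.log q)
  simp_rw [← mul_div_assoc, ← Finset.sum_div]
  rw [← neg_div, ← neg_div, ← neg_div, ← neg_div, ← add_div, ← add_div]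
  refine div_le_div_of_nonneg_right ?_ hlq.le
  simp_rw [mul_sub, mul_add] at h3
  simp only [Finset.sum_sub_distrib, Finset.sum_add_distrib] at h3
  linarith

/-- General submodularity: `M` is determined by `U` and by `V`, `J` by the pair. -/
lemma ent_submod (hq : 1 < q) (hp0 : ∀ ω, 0 ≤ p ω)
    {TJ TM TU TV : Type} [Fintype TJ] [DecidableEq TJ] [Fintype TM] [DecidableEq TM]
    [Fintype TU] [DecidableEq TU] [Fintype TV] [DecidableEq TV]
    (J : Ω → TJ) (M : Ω → TM) (U : Ω → TU) (V : Ω → TV)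
    (hU : ∀ ω ω', U ω = U ω' → M ω = M ω') (hV : ∀ ω ω', V ω = V ω' → M ω = M ω')
    (hJ : ∀ ω ω', U ω = U ω' → V ω = V ω' → J ω = J ω') :
    ent q p J + ent q p M ≤ ent q p U + ent q p V := by
  have h1 := ent_sub hq hp0 U V M
  have h2 := ent_mono hq hp0 J (fun ω => (U ω, V ω, M ω)) (by
    intro ω ω' h
    simp only [Prod.mk.injEq] at h
    exact hJ _ _ h.1 h.2.1)
  have h3 := ent_mono hq hp0 (fun ω => (U ω, M ω)) U (by
    intro ω ω' h
    simp only [Prod.mk.injEq]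
    exact ⟨h, hU _ _ h⟩)
  have h4 := ent_mono hq hp0 (fun ω => (V ω, M ω)) V (by
    intro ω ω' h
    simp only [Prod.mk.injEq]
    exact ⟨h, hV _ _ h⟩)
  linarith

lemma ent_const (hp1 : ∑ ω, p ω = 1) : ent q p (fun _ : Ω => ()) = 0 := by
  simp [ent, prob, hp1]

lemma ent_subadd (hq : 1 < q) (hp0 : ∀ ω, 0 ≤ p ω) (hp1 : ∑ ω, p ω = 1)
    {TJ TU TV : Type} [Fintype TJ] [DecidableEq TJ]
    [Fintype TU] [DecidableEq TU] [Fintype TV] [DecidableEq TV]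
    (J : Ω → TJ) (U : Ω → TU) (V : Ω → TV)
    (hJ : ∀ ω ω', U ω = U ω' → V ω = V ω' → J ω = J ω') :
    ent q p J ≤ ent q p U + ent q p V := by
  have := ent_submod hq hp0 J (fun _ => ()) U V (fun _ _ _ => rfl) (fun _ _ _ => rfl) hJ
  rw [ent_const hp1] at this
  linarith

lemma ent_le_card (hq : 1 < q) (hp0 : ∀ ω, 0 ≤ p ω) (hp1 : ∑ ω, p ω = 1)
    {V : Type} [Fintype V] [DecidableEq V] (X : Ω → V) :
    ent q p X ≤ Real.logb q (Fintype.card V) := by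
  have hlq : 0 < Real.log q := Real.log_pos (by exact_mod_cast hq)
  have hne : Nonempty V := by
    by_contra hV
    rw [not_nonempty_iff] at hV
    have : IsEmpty Ω := ⟨fun ω => hV.false (X ω)⟩
    simp at hp1
  have hc : (0 : ℝ) < Fintype.card V := by exact_mod_cast Fintype.card_pos
  set c : ℝ := (Fintype.card V : ℝ) with hcdef
  have hs : ∑ v, prob p X v = 1 := (sum_prob X).trans hp1
  have h : ∑ v, (prob p X v * (-Real.log (prob p X v)) - prob p X v * Real.log c) ≤
      ∑ v, (1 / c - prob p X v) := by
    refine Finset.sum_le_sum fun v _ => ?_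
    rcases (prob_nonneg' hp0 X v).eq_or_lt with h0 | h0
    · rw [← h0]
      simp [hc.le]
    · have := Real.log_le_sub_one_of_pos (one_div_pos.2 (mul_pos h0 hc))
      rw [Real.log_div one_ne_zero (mul_pos h0 hc).ne', Real.log_one,
        Real.log_mul h0.ne' hc.ne'] at this
      have h5 := mul_le_mul_of_nonneg_left this h0.le
      have h6 : prob p X v * (1 / (prob p X v * c) - 1) = 1 / c - prob p X v := by
        field_simp
      rw [h6] at h5
      linarith
  have h7 : ∑ _v : V, 1 / c = 1 := by
    rw [Finset.sum_const, Finset.card_univ, nsmul_eq_mul, ← hcdef]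
    field_simp
  rw [Finset.sum_sub_distrib, Finset.sum_sub_distrib, h7, hs, ← Finset.sum_mul, hs] at h
  unfold ent Real.logb
  simp_rw [← mul_div_assoc, ← Finset.sum_div]
  rw [← neg_div]
  refine div_le_div_of_nonneg_right ?_ hlq.le
  simp_rw [mul_neg, Finset.sum_neg_distrib] at h
  linarith

lemma prob_comp {V U : Type} [Fintype V] [DecidableEq V] [DecidableEq U]
    (X : Ω → V) (g : V → U) (u : U) :
    prob p (fun ω => g (X ω)) u = ∑ v ∈ Finset.univ.filter (fun v => g v = u), prob p X v := by
  have := sum_prob_mul (p := p) X (fun v => if g v = u then 1 else 0)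
  simp only [mul_ite, mul_one, mul_zero] at this
  rw [← Finset.sum_filter, ← Finset.sum_filter] at this
  exact this.symm

lemma ent_congr {V U : Type} [Fintype V] [DecidableEq V] [Fintype U] [DecidableEq U]
    (X Y : Ω → V) (g : V → U) (h : IdentDist p X Y) :
    ent q p (fun ω => g (X ω)) = ent q p (fun ω => g (Y ω)) := by
  unfold ent
  have h' : prob p X = prob p Y := funext h
  simp only [prob_comp X g, prob_comp Y g, h']

end helpers

set_option maxHeartbeats 4000000 in
theorem common_randomness_size_converse
    {Ω MT QT AT FT : Type}
    [Fintype Ω] [Fintype MT] [DecidableEq MT] [Fintype QT] [DecidableEq QT]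
    [Fintype AT] [DecidableEq AT] [Fintype FT] [DecidableEq FT]
    (N K P L q : ℕ) (hN : 2 ≤ N) (hK : 2 ≤ K) (hP1 : 1 ≤ P) (hP2 : P ≤ K - 1)
    (hL : 1 ≤ L) (hq : IsPrimePow q)
    (p : Ω → ℝ) (hp0 : ∀ ω, 0 ≤ p ω) (hp1 : (∑ ω, p ω) = 1)
    (W : Fin K → Ω → MT) (F : Ω → FT)
    (s : ℕ) (S : Ω → (Fin s → Fin q))
    (Q : Finset (Fin K) → Fin N → Ω → QT)
    (A : Finset (Fin K) → Fin N → Ω → AT)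
    (hWk : ∀ k, ent q p (W k) = (L : ℝ))
    (hWall : ent q p (fun ω (k : Fin K) => W k ω) = (K : ℝ) * L)
    (hind : ent q p (fun ω => (F ω, S ω, fun k : Fin K => W k ω)) =
      ent q p F + ent q p S + ent q p (fun ω (k : Fin K) => W k ω))
    (hQdet : ∀ 𝒫₀ : Finset (Fin K), 𝒫₀.card = P →
      cent q p (fun ω (n : Fin N) => Q 𝒫₀ n ω) F = 0)
    (hAdet : ∀ 𝒫₀ : Finset (Fin K), 𝒫₀.card = P → ∀ n : Fin N,
      cent q p (A 𝒫₀ n) (fun ω => (Q 𝒫₀ n ω, (fun k : Fin K => W k ω), S ω)) = 0)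
    (hrel : ∀ 𝒫₀ : Finset (Fin K), 𝒫₀.card = P →
      cent q p (fun ω (k : {x : Fin K // x ∈ 𝒫₀}) => W k.1 ω)
        (fun ω => ((fun n : Fin N => A 𝒫₀ n ω), F ω)) = 0)
    (hupriv : ∀ (n : Fin N) (𝒫₁ 𝒫₂ : Finset (Fin K)), 𝒫₁.card = P → 𝒫₂.card = P →
      IdentDist p
        (fun ω => (Q 𝒫₁ n ω, A 𝒫₁ n ω, (fun k : Fin K => W k ω), S ω))
        (fun ω => (Q 𝒫₂ n ω, A 𝒫₂ n ω, (fun k : Fin K => W k ω), S ω)))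
    (hdpriv : ∀ 𝒫₀ : Finset (Fin K), 𝒫₀.card = P →
      mi q p (fun ω (k : {x : Fin K // x ∈ 𝒫₀ᶜ}) => W k.1 ω)
        (fun ω => ((fun n : Fin N => Q 𝒫₀ n ω), (fun n : Fin N => A 𝒫₀ n ω), F ω)) = 0)
    : Nat.ceil ((P : ℝ) * L / ((N : ℝ) - 1)) ≤ s := by
  classical
  have hq1 : 1 < q := hq.one_lt
  have hPK : P + 1 ≤ K := by omega
  obtain ⟨w, hw⟩ : ∃ w : (T : Finset (Fin K)) → Ω → ({x : Fin K // x ∈ T} → MT),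
    w = fun T ω k => W k.1 ω := ⟨_, rfl⟩
  obtain ⟨Wa, hWa'⟩ : ∃ Wa : Ω → (Fin K → MT), Wa = fun ω k => W k ω := ⟨_, rfl⟩
  have w_eq : ∀ (T : Finset (Fin K)) (ω ω' : Ω), w T ω = w T ω' ↔ ∀ k ∈ T, W k ω = W k ω' := by
    intro T ω ω'
    simp [hw, funext_iff]
  have Wa_eq : ∀ (ω ω' : Ω), Wa ω = Wa ω' ↔ ∀ k, W k ω = W k ω' := by
    intro ω ω'
    simp [hWa', funext_iff]
  have hWa : ent q p Wa = (K : ℝ) * L := by rw [hWa']; exact hWall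
  have hindep : ent q p (fun ω => (F ω, S ω, Wa ω)) = ent q p F + ent q p S + (K : ℝ) * L := by
    rw [← hWa, hWa']; exact hind
  -- (a)
  have hwle : ∀ T : Finset (Fin K), ent q p (w T) ≤ (T.card : ℝ) * L := by
    intro T
    induction T using Finset.induction_on with
    | empty =>
      have h1 := ent_mono hq1 hp0 (w ∅) (fun _ => ()) (by intro ω ω' _; simp [w_eq])
      rw [ent_const hp1] at h1
      simpa using h1
    | insert k T hk ih =>
      have h1 := ent_subadd hq1 hp0 hp1 (w (insert k T)) (W k) (w T) (by
        intro ω ω' h1 h2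
        rw [w_eq] at *
        intro j hj
        rcases Finset.mem_insert.1 hj with rfl | hj
        · exact h1
        · exact h2 _ hj)
      rw [hWk] at h1
      rw [Finset.card_insert_of_notMem hk]
      push_cast
      linarith
  have hccard : ∀ T : Finset (Fin K), ((Tᶜ).card : ℝ) = K - T.card := by
    intro T
    rw [Finset.card_compl, Fintype.card_fin, Nat.cast_sub]
    simpa using Finset.card_le_univ T
  have hwge : ∀ T : Finset (Fin K), ((K : ℝ) - T.card) * L ≤ ent q p (w Tᶜ) := by
    intro T
    have h1 := ent_subadd hq1 hp0 hp1 Wa (w T) (w Tᶜ) (by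
      intro ω ω' h1 h2
      rw [w_eq] at *
      rw [Wa_eq]
      intro j
      by_cases hj : j ∈ T
      · exact h1 _ hj
      · exact h2 _ (Finset.mem_compl.2 hj))
    have h2 := hwle T
    rw [hWa] at h1
    linarith
  -- (c)
  have hc : ∀ (R : Finset (Fin K)) (n : Fin N), R.card = P →
      ((K : ℝ) - P) * L + ent q p (fun ω => (w R ω, A R n ω, Q R n ω)) ≤
        ent q p (fun ω => (Wa ω, A R n ω, Q R n ω)) := by
    intro R n hR
    have hd := hdpriv R hR
    have hr := hrel R hR
    have e1 : (fun ω (k : {x : Fin K // x ∈ R}) => W k.1 ω) = w R := by rw [hw]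
    have e2 : (fun ω (k : {x : Fin K // x ∈ Rᶜ}) => W k.1 ω) = w Rᶜ := by rw [hw]
    have hd' : ent q p (w Rᶜ) + ent q p (fun ω => ((fun n : Fin N => Q R n ω),
        (fun n : Fin N => A R n ω), F ω)) - ent q p (fun ω => (w Rᶜ ω,
        ((fun n : Fin N => Q R n ω), (fun n : Fin N => A R n ω), F ω))) = 0 := by
      rw [← e2]; exact hd
    have hr' : ent q p (fun ω => (w R ω, ((fun n : Fin N => A R n ω), F ω))) -
        ent q p (fun ω => ((fun n : Fin N => A R n ω), F ω)) = 0 := by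
      rw [← e1]; exact hr
    have h1 := ent_submod hq1 hp0
      (fun ω => (w R ω, ((fun n : Fin N => Q R n ω), (fun n : Fin N => A R n ω), F ω)))
      (fun ω => ((fun n : Fin N => A R n ω), F ω))
      (fun ω => (w R ω, ((fun n : Fin N => A R n ω), F ω)))
      (fun ω => ((fun n : Fin N => Q R n ω), (fun n : Fin N => A R n ω), F ω))
      (by simp only [Prod.mk.injEq]; tauto) (by simp only [Prod.mk.injEq]; tauto)
      (by simp only [Prod.mk.injEq]; tauto)
    have h2 := ent_mono hq1 hp0
      (fun ω => (w Rᶜ ω, ((fun n : Fin N => Q R n ω), (fun n : Fin N => A R n ω), F ω)))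
      (fun ω => (w Rᶜ ω, w R ω, ((fun n : Fin N => Q R n ω), (fun n : Fin N => A R n ω), F ω)))
      (by simp only [Prod.mk.injEq]; tauto)
    have h3 := ent_submod hq1 hp0
      (fun ω => (w Rᶜ ω, w R ω, ((fun n : Fin N => Q R n ω), (fun n : Fin N => A R n ω), F ω)))
      (fun ω => (w R ω, A R n ω, Q R n ω))
      (fun ω => (Wa ω, A R n ω, Q R n ω))
      (fun ω => (w R ω, ((fun n : Fin N => Q R n ω), (fun n : Fin N => A R n ω), F ω)))
      (by
        simp only [Prod.mk.injEq, Wa_eq, w_eq]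
        exact fun ω ω' h => ⟨fun k _ => h.1 k, h.2⟩)
      (by
        simp only [Prod.mk.injEq]
        exact fun ω ω' h => ⟨h.1, congrFun h.2.2.1 n, congrFun h.2.1 n⟩)
      (by
        simp only [Prod.mk.injEq, Wa_eq, w_eq]
        exact fun ω ω' h h' => ⟨fun k _ => h.1 k, h'⟩)
    have h4 := hwge R
    rw [hR] at h4
    linarith
  obtain ⟨𝒫₀, h𝒫₀⟩ : ∃ 𝒫₀ : Finset (Fin K), 𝒫₀.card = P := by
    obtain ⟨t, -, ht⟩ := Finset.exists_subset_card_eq (s := (Finset.univ : Finset (Fin K)))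
      (n := P) (by simp; omega)
    exact ⟨t, ht⟩
  -- (d)
  have hd : ∀ (n : Fin N) (R : Finset (Fin K)), R.card = P →
      ((K : ℝ) - P) * L + ent q p (fun ω => (w R ω, A 𝒫₀ n ω, Q 𝒫₀ n ω)) ≤
        ent q p (fun ω => (Wa ω, A 𝒫₀ n ω, Q 𝒫₀ n ω)) := by
    intro n R hR
    have h1 := hc R n hR
    have hI := hupriv n R 𝒫₀ hR h𝒫₀
    have e1 := ent_congr (q := q) _ _ (fun v : QT × AT × (Fin K → MT) × (Fin s → Fin q) =>
      ((fun k : {x : Fin K // x ∈ R} => v.2.2.1 k.1), v.2.1, v.1)) hI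
    have e2 := ent_congr (q := q) _ _ (fun v : QT × AT × (Fin K → MT) × (Fin s → Fin q) =>
      (v.2.2.1, v.2.1, v.1)) hI
    subst hw hWa'
    simp only at e1 e2
    rw [← e1, ← e2]
    exact h1
  -- (f)
  have hf : ∀ n : Fin N, ent q p (fun ω => (A 𝒫₀ n ω, Q 𝒫₀ n ω)) + (K : ℝ) * L ≤
      ent q p (fun ω => (Wa ω, A 𝒫₀ n ω, Q 𝒫₀ n ω)) := by
    intro n
    have step : ∀ T : Finset (Fin K), T.card ≤ P →
        ent q p (fun ω => (A 𝒫₀ n ω, Q 𝒫₀ n ω)) + (T.card : ℝ) * L ≤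
          ent q p (fun ω => (w T ω, A 𝒫₀ n ω, Q 𝒫₀ n ω)) := by
      intro T
      induction T using Finset.induction_on with
      | empty =>
        intro _
        have h1 := ent_mono hq1 hp0 (fun ω => (A 𝒫₀ n ω, Q 𝒫₀ n ω))
          (fun ω => (w ∅ ω, A 𝒫₀ n ω, Q 𝒫₀ n ω)) (by simp only [Prod.mk.injEq]; tauto)
        simpa using h1
      | insert k T hk ih =>
        intro hT
        rw [Finset.card_insert_of_notMem hk] at hT ⊢
        have ih := ih (by omega)
        obtain ⟨R, hTR, hRk, hR⟩ := Finset.exists_subsuperset_card_eq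
          (s := T) (t := Finset.univ.erase k) (n := P)
          (by intro x hx; simp; rintro rfl; exact hk hx) (by omega)
          (by simp; omega)
        have hkR : k ∉ R := fun h => by simpa using hRk h
        have h1 := hd n R hR
        have h2 := ent_submod hq1 hp0
          (fun ω => (w (insert k R) ω, A 𝒫₀ n ω, Q 𝒫₀ n ω))
          (fun ω => (w T ω, A 𝒫₀ n ω, Q 𝒫₀ n ω))
          (fun ω => (w (insert k T) ω, A 𝒫₀ n ω, Q 𝒫₀ n ω))
          (fun ω => (w R ω, A 𝒫₀ n ω, Q 𝒫₀ n ω))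
          (by
            simp only [Prod.mk.injEq, w_eq]
            exact fun ω ω' h => ⟨fun j hj => h.1 j (Finset.mem_insert_of_mem hj), h.2⟩)
          (by
            simp only [Prod.mk.injEq, w_eq]
            exact fun ω ω' h => ⟨fun j hj => h.1 j (hTR hj), h.2⟩)
          (by
            simp only [Prod.mk.injEq, w_eq]
            refine fun ω ω' h h' => ⟨fun j hj => ?_, h.2⟩
            rcases Finset.mem_insert.1 hj with rfl | hj
            · exact h.1 _ (Finset.mem_insert_self _ _)
            · exact h'.1 _ hj)
        have h3 := ent_subadd hq1 hp0 hp1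
          (fun ω => (Wa ω, A 𝒫₀ n ω, Q 𝒫₀ n ω))
          (fun ω => (w (insert k R) ω, A 𝒫₀ n ω, Q 𝒫₀ n ω))
          (w (insert k R)ᶜ)
          (by
            simp only [Prod.mk.injEq, w_eq, Wa_eq]
            refine fun ω ω' h h' => ⟨fun j => ?_, h.2⟩
            by_cases hj : j ∈ insert k R
            · exact h.1 _ hj
            · exact h' _ (Finset.mem_compl.2 hj))
        have h4 := hwle (insert k R)ᶜ
        rw [hccard, Finset.card_insert_of_notMem hkR, hR] at h4
        push_cast at h4 ⊢
        linarith
    have h1 := step 𝒫₀ h𝒫₀.le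
    have h2 := hd n 𝒫₀ h𝒫₀
    rw [h𝒫₀] at h1
    linarith
  -- consequences of independence
  have hFW : ent q p F + (K : ℝ) * L ≤ ent q p (fun ω => (F ω, Wa ω)) := by
    have h1 := ent_subadd hq1 hp0 hp1 (fun ω => (F ω, S ω, Wa ω)) (fun ω => (F ω, Wa ω)) S
      (by simp only [Prod.mk.injEq]; tauto)
    linarith
  have hFW' : ent q p (fun ω => (F ω, Wa ω)) ≤ ent q p F + (K : ℝ) * L := by
    have h1 := ent_subadd hq1 hp0 hp1 (fun ω => (F ω, Wa ω)) F Wa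
      (by simp only [Prod.mk.injEq]; tauto)
    linarith
  have hQ : ent q p (fun ω => ((fun n : Fin N => Q 𝒫₀ n ω), F ω)) = ent q p F := by
    have := hQdet 𝒫₀ h𝒫₀
    unfold cent at this
    linarith
  have hQn : ∀ n, ent q p (fun ω => (Q 𝒫₀ n ω, F ω)) ≤ ent q p F := by
    intro n
    rw [← hQ]
    refine ent_mono hq1 hp0 _ _ ?_
    simp only [Prod.mk.injEq]
    exact fun ω ω' h => ⟨congrFun h.1 n, h.2⟩
  have hAd : ∀ n, ent q p (fun ω => (A 𝒫₀ n ω, Q 𝒫₀ n ω, Wa ω, S ω)) =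
      ent q p (fun ω => (Q 𝒫₀ n ω, Wa ω, S ω)) := by
    intro n
    have := hAdet 𝒫₀ h𝒫₀ n
    unfold cent at this
    rw [hWa']
    linarith
  obtain ⟨σ, hσ⟩ : ∃ σ, σ = ent q p (fun ω => ((fun n : Fin N => A 𝒫₀ n ω), F ω, Wa ω)) -
    ent q p (fun ω => (F ω, Wa ω)) := ⟨_, rfl⟩
  -- (g)
  have hg : ∀ n, ent q p (fun ω => (A 𝒫₀ n ω, F ω)) - ent q p F ≤ σ := by
    intro n
    have h1 := ent_submod hq1 hp0 (fun ω => (A 𝒫₀ n ω, F ω)) (Q 𝒫₀ n)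
      (fun ω => (A 𝒫₀ n ω, Q 𝒫₀ n ω)) (fun ω => (Q 𝒫₀ n ω, F ω))
      (by simp only [Prod.mk.injEq]; tauto) (by simp only [Prod.mk.injEq]; tauto)
      (by simp only [Prod.mk.injEq]; tauto)
    have h2 := hQn n
    have h3 := hf n
    have h4 := ent_submod hq1 hp0 (fun ω => (F ω, S ω, Wa ω))
      (fun ω => (Wa ω, A 𝒫₀ n ω, Q 𝒫₀ n ω))
      (fun ω => (A 𝒫₀ n ω, Q 𝒫₀ n ω, F ω, Wa ω))
      (fun ω => (A 𝒫₀ n ω, Q 𝒫₀ n ω, Wa ω, S ω))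
      (by simp only [Prod.mk.injEq]; tauto) (by simp only [Prod.mk.injEq]; tauto)
      (by simp only [Prod.mk.injEq]; tauto)
    have h5 := ent_submod hq1 hp0 (fun ω => (A 𝒫₀ n ω, Q 𝒫₀ n ω, F ω, Wa ω)) F
      (fun ω => (Q 𝒫₀ n ω, F ω)) (fun ω => (A 𝒫₀ n ω, F ω, Wa ω))
      (by simp only [Prod.mk.injEq]; tauto) (by simp only [Prod.mk.injEq]; tauto)
      (by simp only [Prod.mk.injEq]; tauto)
    have h6 := ent_subadd hq1 hp0 hp1 (fun ω => (Q 𝒫₀ n ω, Wa ω, S ω))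
      (fun ω => (Q 𝒫₀ n ω, Wa ω)) S (by simp only [Prod.mk.injEq]; tauto)
    have h7 := ent_subadd hq1 hp0 hp1 (fun ω => (Q 𝒫₀ n ω, Wa ω)) (Q 𝒫₀ n) Wa
      (by simp only [Prod.mk.injEq]; tauto)
    have h8 := ent_mono hq1 hp0 (fun ω => (A 𝒫₀ n ω, F ω, Wa ω))
      (fun ω => ((fun n : Fin N => A 𝒫₀ n ω), F ω, Wa ω))
      (by
        simp only [Prod.mk.injEq]
        exact fun ω ω' h => ⟨congrFun h.1 n, h.2⟩)
    have h9 := hAd n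
    linarith
  -- (h)
  have hh : ent q p (fun ω => ((fun n : Fin N => A 𝒫₀ n ω), F ω)) ≤ ent q p F + N * σ := by
    have step : ∀ T : Finset (Fin N),
        ent q p (fun ω => ((fun n : {x : Fin N // x ∈ T} => A 𝒫₀ n.1 ω), F ω)) ≤
          ent q p F + T.card * σ := by
      intro T
      induction T using Finset.induction_on with
      | empty =>
        have h1 := ent_mono hq1 hp0
          (fun ω => ((fun n : {x : Fin N // x ∈ (∅ : Finset (Fin N))} => A 𝒫₀ n.1 ω), F ω)) F
          (by simp [funext_iff])
        simpa using h1
      | insert k T hk ih =>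
        have h1 := ent_submod hq1 hp0
          (fun ω => ((fun n : {x : Fin N // x ∈ insert k T} => A 𝒫₀ n.1 ω), F ω)) F
          (fun ω => (A 𝒫₀ k ω, F ω))
          (fun ω => ((fun n : {x : Fin N // x ∈ T} => A 𝒫₀ n.1 ω), F ω))
          (by simp only [Prod.mk.injEq]; tauto) (by simp only [Prod.mk.injEq]; tauto)
          (by
            simp only [Prod.mk.injEq, funext_iff, Subtype.forall]
            refine fun ω ω' h h' => ⟨fun j hj => ?_, h.2⟩
            rcases Finset.mem_insert.1 hj with rfl | hj
            · exact h.1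
            · exact h'.1 _ hj)
        have h2 := hg k
        rw [Finset.card_insert_of_notMem hk]
        push_cast
        linarith
    have h1 := step Finset.univ
    have h2 := ent_mono hq1 hp0 (fun ω => ((fun n : Fin N => A 𝒫₀ n ω), F ω))
      (fun ω => ((fun n : {x : Fin N // x ∈ (Finset.univ : Finset (Fin N))} => A 𝒫₀ n.1 ω), F ω))
      (by simp [funext_iff])
    rw [Finset.card_univ, Fintype.card_fin] at h1
    linarith
  -- (i)
  have hi : (P : ℝ) * L + ent q p F + σ ≤
      ent q p (fun ω => ((fun n : Fin N => A 𝒫₀ n ω), F ω)) := by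
    have hr := hrel 𝒫₀ h𝒫₀
    have e1 : (fun ω (k : {x : Fin K // x ∈ 𝒫₀}) => W k.1 ω) = w 𝒫₀ := by rw [hw]
    have hr' : ent q p (fun ω => (w 𝒫₀ ω, ((fun n : Fin N => A 𝒫₀ n ω), F ω))) -
        ent q p (fun ω => ((fun n : Fin N => A 𝒫₀ n ω), F ω)) = 0 := by
      rw [← e1]; exact hr
    have h1 := ent_subadd hq1 hp0 hp1
      (fun ω => ((fun n : Fin N => A 𝒫₀ n ω), F ω, Wa ω))
      (fun ω => (w 𝒫₀ ω, ((fun n : Fin N => A 𝒫₀ n ω), F ω))) (w 𝒫₀ᶜ)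
      (by
        simp only [Prod.mk.injEq, w_eq, Wa_eq]
        refine fun ω ω' h h' => ⟨h.2.1, h.2.2, fun j => ?_⟩
        by_cases hj : j ∈ 𝒫₀
        · exact h.1 _ hj
        · exact h' _ (Finset.mem_compl.2 hj))
    have h2 := hwle 𝒫₀ᶜ
    rw [hccard, h𝒫₀] at h2
    linarith
  -- (j)
  have hj : σ ≤ ent q p S := by
    have step : ∀ T : Finset (Fin N),
        ent q p (fun ω => ((fun n : {x : Fin N // x ∈ T} => A 𝒫₀ n.1 ω), F ω, S ω, Wa ω)) ≤
          ent q p (fun ω => (F ω, S ω, Wa ω)) := by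
      intro T
      induction T using Finset.induction_on with
      | empty =>
        refine ent_mono hq1 hp0 _ _ ?_
        simp only [Prod.mk.injEq]
        exact fun ω ω' h => ⟨funext fun x => absurd x.2 (Finset.notMem_empty _), h⟩
      | insert k T hk ih =>
        have h1 := ent_submod hq1 hp0
          (fun ω => ((fun n : {x : Fin N // x ∈ insert k T} => A 𝒫₀ n.1 ω), F ω, S ω, Wa ω))
          (fun ω => (F ω, S ω, Wa ω))
          (fun ω => (A 𝒫₀ k ω, F ω, S ω, Wa ω))
          (fun ω => ((fun n : {x : Fin N // x ∈ T} => A 𝒫₀ n.1 ω), F ω, S ω, Wa ω))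
          (by simp only [Prod.mk.injEq]; tauto) (by simp only [Prod.mk.injEq]; tauto)
          (by
            simp only [Prod.mk.injEq, funext_iff, Subtype.forall]
            refine fun ω ω' h h' => ⟨fun j hj => ?_, h.2⟩
            rcases Finset.mem_insert.1 hj with rfl | hj
            · exact h.1
            · exact h'.1 _ hj)
        have h2 := ent_submod hq1 hp0 (fun ω => (A 𝒫₀ k ω, F ω, S ω, Wa ω))
          (fun ω => (Q 𝒫₀ k ω, Wa ω, S ω))
          (fun ω => (A 𝒫₀ k ω, Q 𝒫₀ k ω, Wa ω, S ω))
          (fun ω => (Q 𝒫₀ k ω, F ω, S ω, Wa ω))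
          (by simp only [Prod.mk.injEq]; tauto) (by simp only [Prod.mk.injEq]; tauto)
          (by simp only [Prod.mk.injEq]; tauto)
        have h3 := ent_submod hq1 hp0 (fun ω => (Q 𝒫₀ k ω, F ω, S ω, Wa ω)) F
          (fun ω => (Q 𝒫₀ k ω, F ω)) (fun ω => (F ω, S ω, Wa ω))
          (by simp only [Prod.mk.injEq]; tauto) (by simp only [Prod.mk.injEq]; tauto)
          (by simp only [Prod.mk.injEq]; tauto)
        have h4 := hQn k
        have h5 := hAd k
        linarith
    have h1 := step Finset.univ
    have h2 := ent_mono hq1 hp0 (fun ω => ((fun n : Fin N => A 𝒫₀ n ω), F ω, Wa ω))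
      (fun ω => ((fun n : {x : Fin N // x ∈ (Finset.univ : Finset (Fin N))} => A 𝒫₀ n.1 ω),
        F ω, S ω, Wa ω))
      (by
        simp only [Prod.mk.injEq]
        exact fun ω ω' h =>
          ⟨funext fun n => congrFun h.1 ⟨n, Finset.mem_univ n⟩, h.2.1, h.2.2.2⟩)
    linarith
  -- (k)
  have hk : ent q p S ≤ s := by
    have h1 := ent_le_card hq1 hp0 hp1 S
    have hq0 : (1 : ℝ) < q := by exact_mod_cast hq1
    rw [Fintype.card_fun, Fintype.card_fin, Fintype.card_fin, Nat.cast_pow, Real.logb_pow,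
      Real.logb_self_eq_one hq0, mul_one] at h1
    exact h1
  have hN' : (0 : ℝ) < (N : ℝ) - 1 := by
    have : (2 : ℝ) ≤ N := by exact_mod_cast hN
    linarith
  refine Nat.ceil_le.2 ?_
  rw [div_le_iff₀ hN']
  have h1 : (P : ℝ) * L ≤ ((N : ℝ) - 1) * σ := by linarith
  have h2 : ((N : ℝ) - 1) * σ ≤ ((N : ℝ) - 1) * s :=
    mul_le_mul_of_nonneg_left (hj.trans hk) hN'.le
  linarith

end MMSPIR
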